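/- arXiv:0812.2605 — 3 statements merged into one kernel-verified Lean document; each statement's English description precedes it below -/
import Mathlib

section
/- Assume in addition the contact metric algebraic relation h∘φ = −φ∘h. Then for all X, Y, Z, W ∈ V orthogonal to ξ: R₄(φX,φY,φZ,φW) = −R₄(X,Y,Z,W), R₅(φX,φY,φZ,φW) = R₅(X,Y,Z,W), and therefore R(φX,φY,φZ,φW) = R(X,Y,Z,W) − 2f₄·R₄(X,Y,Z,W). -/
open RealInnerProductSpace

variable {V : Type*} [NormedAddCommGroup V] [InnerProductSpace ℝ V]

/-- R₁(X,Y)Z = ⟨Y,Z⟩X − ⟨X,Z⟩Y -/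
noncomputable def R1 (X Y Z : V) : V := ⟪Y, Z⟫ • X - ⟪X, Z⟫ • Y

/-- R₂(X,Y)Z = ⟨X,φZ⟩φY − ⟨Y,φZ⟩φX + 2⟨X,φY⟩φZ -/
noncomputable def R2 (φ : V →ₗ[ℝ] V) (X Y Z : V) : V :=
  ⟪X, φ Z⟫ • φ Y - ⟪Y, φ Z⟫ • φ X + (2 * ⟪X, φ Y⟫) • φ Z

/-- R₃(X,Y)Z = η(X)η(Z)Y − η(Y)η(Z)X + ⟨X,Z⟩η(Y)ξ − ⟨Y,Z⟩η(X)ξ, where η(X) = ⟨X,ξ⟩ -/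
noncomputable def R3 (ξ : V) (X Y Z : V) : V :=
  (⟪X, ξ⟫ * ⟪Z, ξ⟫) • Y - (⟪Y, ξ⟫ * ⟪Z, ξ⟫) • X
    + (⟪X, Z⟫ * ⟪Y, ξ⟫) • ξ - (⟪Y, Z⟫ * ⟪X, ξ⟫) • ξ

/-- R₄(X,Y)Z = ⟨Y,Z⟩hX − ⟨X,Z⟩hY + ⟨hY,Z⟩X − ⟨hX,Z⟩Y -/
noncomputable def R4 (h : V →ₗ[ℝ] V) (X Y Z : V) : V :=
  ⟪Y, Z⟫ • h X - ⟪X, Z⟫ • h Y + ⟪h Y, Z⟫ • X - ⟪h X, Z⟫ • Y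

/-- R₅(X,Y)Z = ⟨hY,Z⟩hX − ⟨hX,Z⟩hY + ⟨φhX,Z⟩φhY − ⟨φhY,Z⟩φhX -/
noncomputable def R5 (φ h : V →ₗ[ℝ] V) (X Y Z : V) : V :=
  ⟪h Y, Z⟫ • h X - ⟪h X, Z⟫ • h Y
    + ⟪φ (h X), Z⟫ • φ (h Y) - ⟪φ (h Y), Z⟫ • φ (h X)

/-- R₆(X,Y)Z = η(X)η(Z)hY − η(Y)η(Z)hX + ⟨hX,Z⟩η(Y)ξ − ⟨hY,Z⟩η(X)ξ -/
noncomputable def R6 (ξ : V) (h : V →ₗ[ℝ] V) (X Y Z : V) : V :=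
  (⟪X, ξ⟫ * ⟪Z, ξ⟫) • h Y - (⟪Y, ξ⟫ * ⟪Z, ξ⟫) • h X
    + (⟪h X, Z⟫ * ⟪Y, ξ⟫) • ξ - (⟪h Y, Z⟫ * ⟪X, ξ⟫) • ξ

/-- R = f₁R₁ + f₂R₂ + f₃R₃ + f₄R₄ + f₅R₅ + f₆R₆ -/
noncomputable def Rc (φ h : V →ₗ[ℝ] V) (ξ : V) (f₁ f₂ f₃ f₄ f₅ f₆ : ℝ) (X Y Z : V) : V :=
  f₁ • R1 X Y Z + f₂ • R2 φ X Y Z + f₃ • R3 ξ X Y Z + f₄ • R4 h X Y Z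
    + f₅ • R5 φ h X Y Z + f₆ • R6 ξ h X Y Z

/-- R(X,Y,Z,W) = ⟨R(X,Y)Z, W⟩ -/
noncomputable def Rq (φ h : V →ₗ[ℝ] V) (ξ : V) (f₁ f₂ f₃ f₄ f₅ f₆ : ℝ) (X Y Z W : V) : ℝ :=
  ⟪Rc φ h ξ f₁ f₂ f₃ f₄ f₅ f₆ X Y Z, W⟫

/-!
The map `φ` sends `ξᗮ` isometrically into itself and anticommutes with `h`. Hence applying `φ` to
the three arguments of `R₁`, `R₂`, `R₄` or `R₅` amounts to applying `φ` to the value, with a sign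
`-1` for `R₄` only, which is of odd degree in `h`, while `R₃` and `R₆` vanish on `ξᗮ`. Pairing
these vector identities with `φ W` removes the outer `φ`.
-/

/-- Compatibility of the inner product with an almost contact structure `(φ, ξ, η)`, where
`η = ⟪·, ξ⟫`. It does not include the identity `φ² = -1 + η ⊗ ξ`. -/
def IsCompatible (φ : V →ₗ[ℝ] V) (ξ : V) : Prop :=
  ∀ X Y : V, ⟪φ X, φ Y⟫ = ⟪X, Y⟫ - ⟪X, ξ⟫ * ⟪Y, ξ⟫

variable {φ h : V →ₗ[ℝ] V} {ξ X Y Z : V}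

namespace IsCompatible

theorem inner_map_map_of_left (hmet : IsCompatible φ ξ) (hX : ⟪X, ξ⟫ = 0) (Y : V) :
    ⟪φ X, φ Y⟫ = ⟪X, Y⟫ := by
  rw [hmet, hX, zero_mul, sub_zero]

theorem inner_map_map_of_right (hmet : IsCompatible φ ξ) (X : V) (hY : ⟪Y, ξ⟫ = 0) :
    ⟪φ X, φ Y⟫ = ⟪X, Y⟫ := by
  rw [hmet, hY, mul_zero, sub_zero]

theorem map_xi_eq_zero (hmet : IsCompatible φ ξ) (hξ : ‖ξ‖ = 1) : φ ξ = 0 := by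
  have hφξ : ⟪φ ξ, φ ξ⟫ = 0 := by
    rw [hmet, real_inner_self_eq_norm_sq, hξ]
    norm_num
  exact inner_self_eq_zero.mp hφξ

end IsCompatible

theorem inner_map_xi_eq_zero (hφ2 : ∀ X : V, φ (φ X) = -X + ⟪X, ξ⟫ • ξ) (hφξ : φ ξ = 0) (X : V) :
    ⟪φ X, ξ⟫ = 0 := by
  -- Compare the two evaluations `φ² (φ X)` and `φ (φ² X)` of `φ³ X`.
  have hcube : -φ X + ⟪φ X, ξ⟫ • ξ = -φ X := by
    calc -φ X + ⟪φ X, ξ⟫ • ξ = φ (φ (φ X)) := (hφ2 (φ X)).symm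
      _ = φ (-X + ⟪X, ξ⟫ • ξ) := by rw [hφ2 X]
      _ = -φ X := by rw [map_add, map_neg, map_smul, hφξ, smul_zero, add_zero]
  rcases smul_eq_zero.mp (add_eq_left.mp hcube) with hη | rfl
  · exact hη
  · exact inner_zero_right _

theorem R1_map (hmet : IsCompatible φ ξ) (X Y : V) (hZ : ⟪Z, ξ⟫ = 0) :
    R1 (φ X) (φ Y) (φ Z) = φ (R1 X Y Z) := by
  simp only [R1, hmet.inner_map_map_of_right _ hZ, map_sub, map_smul]

theorem R2_map (hmet : IsCompatible φ ξ) (hX : ⟪X, ξ⟫ = 0) (hY : ⟪Y, ξ⟫ = 0) (Z : V) :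
    R2 φ (φ X) (φ Y) (φ Z) = φ (R2 φ X Y Z) := by
  simp only [R2, hmet.inner_map_map_of_left hX, hmet.inner_map_map_of_left hY, map_add, map_sub,
    map_smul]

theorem R3_eq_zero (hX : ⟪X, ξ⟫ = 0) (hY : ⟪Y, ξ⟫ = 0) (Z : V) : R3 ξ X Y Z = 0 := by
  simp [R3, hX, hY]

theorem R4_map (hmet : IsCompatible φ ξ) (hanti : ∀ X : V, h (φ X) = -φ (h X)) (X Y : V)
    (hZ : ⟪Z, ξ⟫ = 0) : R4 h (φ X) (φ Y) (φ Z) = -φ (R4 h X Y Z) := by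
  simp only [R4, hanti, inner_neg_left, hmet.inner_map_map_of_right _ hZ, map_add, map_sub,
    map_smul]
  module

theorem R5_map (hmet : IsCompatible φ ξ) (hanti : ∀ X : V, h (φ X) = -φ (h X)) (X Y : V)
    (hZ : ⟪Z, ξ⟫ = 0) : R5 φ h (φ X) (φ Y) (φ Z) = φ (R5 φ h X Y Z) := by
  simp only [R5, hanti, map_neg, inner_neg_left, hmet.inner_map_map_of_right _ hZ, map_add,
    map_sub, map_smul]
  module

theorem R6_eq_zero (h : V →ₗ[ℝ] V) (hX : ⟪X, ξ⟫ = 0) (hY : ⟪Y, ξ⟫ = 0) (Z : V) :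
    R6 ξ h X Y Z = 0 := by
  simp [R6, hX, hY]

theorem Rc_map (f₁ f₂ f₃ f₄ f₅ f₆ : ℝ) (hmet : IsCompatible φ ξ) (hη : ∀ X : V, ⟪φ X, ξ⟫ = 0)
    (hanti : ∀ X : V, h (φ X) = -φ (h X))
    (hX : ⟪X, ξ⟫ = 0) (hY : ⟪Y, ξ⟫ = 0) (hZ : ⟪Z, ξ⟫ = 0) :
    Rc φ h ξ f₁ f₂ f₃ f₄ f₅ f₆ (φ X) (φ Y) (φ Z) =
      φ (Rc φ h ξ f₁ f₂ f₃ f₄ f₅ f₆ X Y Z - (2 * f₄) • R4 h X Y Z) := by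
  simp only [Rc, R1_map hmet X Y hZ, R2_map hmet hX hY, R3_eq_zero (hη X) (hη Y),
    R3_eq_zero hX hY, R4_map hmet hanti X Y hZ, R5_map hmet hanti X Y hZ,
    R6_eq_zero h (hη X) (hη Y), R6_eq_zero h hX hY, map_add, map_sub, map_smul, map_zero]
  module

theorem stmt6_general (f₁ f₂ f₃ f₄ f₅ f₆ : ℝ) (hmet : IsCompatible φ ξ)
    (hη : ∀ X : V, ⟪φ X, ξ⟫ = 0) (hanti : ∀ X : V, h (φ X) = -φ (h X)) :
    ∀ X Y Z W : V, ⟪X, ξ⟫ = 0 → ⟪Y, ξ⟫ = 0 → ⟪Z, ξ⟫ = 0 → ⟪W, ξ⟫ = 0 →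
      ⟪R4 h (φ X) (φ Y) (φ Z), φ W⟫ = -⟪R4 h X Y Z, W⟫ ∧
      ⟪R5 φ h (φ X) (φ Y) (φ Z), φ W⟫ = ⟪R5 φ h X Y Z, W⟫ ∧
      Rq φ h ξ f₁ f₂ f₃ f₄ f₅ f₆ (φ X) (φ Y) (φ Z) (φ W) =
        Rq φ h ξ f₁ f₂ f₃ f₄ f₅ f₆ X Y Z W - 2 * f₄ * ⟪R4 h X Y Z, W⟫ := by
  intro X Y Z W hX hY hZ hW
  refine ⟨?_, ?_, ?_⟩
  · rw [R4_map hmet hanti X Y hZ, inner_neg_left, hmet.inner_map_map_of_right _ hW]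
  · rw [R5_map hmet hanti X Y hZ, hmet.inner_map_map_of_right _ hW]
  · rw [Rq, Rc_map f₁ f₂ f₃ f₄ f₅ f₆ hmet hη hanti hX hY hZ, hmet.inner_map_map_of_right _ hW,
      inner_sub_left, real_inner_smul_left, Rq]

theorem stmt6 {V : Type*} [NormedAddCommGroup V] [InnerProductSpace ℝ V]
    (φ h : V →ₗ[ℝ] V) (ξ : V) (f₁ f₂ f₃ f₄ f₅ f₆ : ℝ)
    (hξ : ‖ξ‖ = 1)
    (hφ2 : ∀ X : V, φ (φ X) = -X + ⟪X, ξ⟫ • ξ)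
    (hmet : ∀ X Y : V, ⟪φ X, φ Y⟫ = ⟪X, Y⟫ - ⟪X, ξ⟫ * ⟪Y, ξ⟫)
    (hsym : ∀ X Y : V, ⟪h X, Y⟫ = ⟪X, h Y⟫)
    (hhξ : h ξ = 0)
    (hanti : ∀ X : V, h (φ X) = -φ (h X)) :
    ∀ X Y Z W : V, ⟪X, ξ⟫ = 0 → ⟪Y, ξ⟫ = 0 → ⟪Z, ξ⟫ = 0 → ⟪W, ξ⟫ = 0 →
      ⟪R4 h (φ X) (φ Y) (φ Z), φ W⟫ = -⟪R4 h X Y Z, W⟫ ∧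
      ⟪R5 φ h (φ X) (φ Y) (φ Z), φ W⟫ = ⟪R5 φ h X Y Z, W⟫ ∧
      Rq φ h ξ f₁ f₂ f₃ f₄ f₅ f₆ (φ X) (φ Y) (φ Z) (φ W) =
        Rq φ h ξ f₁ f₂ f₃ f₄ f₅ f₆ X Y Z W - 2 * f₄ * ⟪R4 h X Y Z, W⟫ := by
  exact stmt6_general f₁ f₂ f₃ f₄ f₅ f₆ hmet
    (inner_map_xi_eq_zero hφ2 (IsCompatible.map_xi_eq_zero hmet hξ)) hanti
end

section
/- Suppose dim V = 2n+1 with n ≥ 1, that tr(h) = 0, and that f₁ − f₃ = 1. Then for any orthonormal basis (e₁, …, e₂ₙ, ξ) of V whose last vector is ξ, the Ricci curvature in the direction ξ satisfies S(ξ,ξ) := Σᵢ₌₁²ⁿ R(eᵢ,ξ,ξ,eᵢ) = 2n. (This is the key computation showing that a contact metric generalized (κ,μ)-space form with f₃ = f₁ − 1 is K-contact, hence Sasakian.) -/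
open RealInnerProductSpace

variable {V : Type*} [NormedAddCommGroup V] [InnerProductSpace ℝ V]

/-!
Since `φξ = 0` and `hξ = 0`, the tensors `R₂` and `R₅` contribute nothing to `R(X, ξ)ξ`, while `R₃`
and `R₆` contribute the negatives of `R₁` and `R₄`. Modulo `ξ`, the vectors `R₁(X, ξ)ξ` and
`R₄(X, ξ)ξ` are `X` and `hX`, so tracing over the orthogonal complement of `ξ` gives
`S(ξ, ξ) = (f₁ - f₃)(dim V - 1) + (f₄ - f₆) tr h`.
-/

section Reeb

variable {φ h : V →ₗ[ℝ] V} {ξ : V} {f₁ f₂ f₃ f₄ f₅ f₆ : ℝ}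

lemma map_reeb_eq_zero (hξ : ‖ξ‖ = 1)
    (hmet : ∀ X Y : V, ⟪φ X, φ Y⟫ = ⟪X, Y⟫ - ⟪X, ξ⟫ * ⟪Y, ξ⟫) : φ ξ = 0 := by
  rw [← inner_self_eq_zero (𝕜 := ℝ), hmet, inner_self_eq_one_of_norm_eq_one hξ, mul_one, sub_self]

lemma R2_reeb_reeb (hφξ : φ ξ = 0) (X : V) : R2 φ X ξ ξ = 0 := by
  simp [R2, hφξ]

lemma R3_reeb_reeb (hξ : ‖ξ‖ = 1) (X : V) : R3 ξ X ξ ξ = -R1 X ξ ξ := by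
  simp [R3, R1, hξ]

lemma R5_reeb_reeb (hhξ : h ξ = 0) (X : V) : R5 φ h X ξ ξ = 0 := by
  simp [R5, hhξ]

lemma R6_reeb_reeb (hξ : ‖ξ‖ = 1) (hhξ : h ξ = 0) (X : V) : R6 ξ h X ξ ξ = -R4 h X ξ ξ := by
  simp [R6, R4, hξ, hhξ, neg_add_eq_sub]

lemma Rc_reeb_reeb (hξ : ‖ξ‖ = 1) (hφξ : φ ξ = 0) (hhξ : h ξ = 0) (X : V) :
    Rc φ h ξ f₁ f₂ f₃ f₄ f₅ f₆ X ξ ξ = (f₁ - f₃) • R1 X ξ ξ + (f₄ - f₆) • R4 h X ξ ξ := by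
  rw [Rc, R2_reeb_reeb hφξ, R3_reeb_reeb hξ, R5_reeb_reeb hhξ, R6_reeb_reeb hξ hhξ]
  module

lemma inner_R1_reeb_reeb (hξ : ‖ξ‖ = 1) (X : V) {Y : V} (hY : ⟪ξ, Y⟫ = 0) :
    ⟪R1 X ξ ξ, Y⟫ = ⟪X, Y⟫ := by
  simp [R1, inner_sub_left, real_inner_smul_left, hξ, hY]

lemma inner_R4_reeb_reeb (hξ : ‖ξ‖ = 1) (hhξ : h ξ = 0) (X : V) {Y : V} (hY : ⟪ξ, Y⟫ = 0) :
    ⟪R4 h X ξ ξ, Y⟫ = ⟪h X, Y⟫ := by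
  simp [R4, inner_sub_left, real_inner_smul_left, hξ, hhξ, hY]

lemma Rq_reeb_reeb (hξ : ‖ξ‖ = 1) (hφξ : φ ξ = 0) (hhξ : h ξ = 0)
    (X : V) {Y : V} (hY : ⟪ξ, Y⟫ = 0) :
    Rq φ h ξ f₁ f₂ f₃ f₄ f₅ f₆ X ξ ξ Y = (f₁ - f₃) * ⟪X, Y⟫ + (f₄ - f₆) * ⟪h X, Y⟫ := by
  rw [Rq, Rc_reeb_reeb hξ hφξ hhξ, inner_add_left, real_inner_smul_left, real_inner_smul_left,
    inner_R1_reeb_reeb hξ X hY, inner_R4_reeb_reeb hξ hhξ X hY]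

end Reeb

lemma sum_inner_castSucc_eq_trace {m : ℕ} (b : OrthonormalBasis (Fin (m + 1)) ℝ V)
    {h : V →ₗ[ℝ] V} (hlast : h (b (Fin.last m)) = 0) :
    ∑ i : Fin m, ⟪h (b i.castSucc), b i.castSucc⟫ = LinearMap.trace ℝ V h := by
  rw [LinearMap.trace_eq_sum_inner h b, Fin.sum_univ_castSucc, hlast, inner_zero_right, add_zero]
  exact Finset.sum_congr rfl fun i _ => real_inner_comm _ _

theorem stmt9_general {φ h : V →ₗ[ℝ] V} {ξ : V} (hφξ : φ ξ = 0) (hhξ : h ξ = 0)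
    (f₁ f₂ f₃ f₄ f₅ f₆ : ℝ) {m : ℕ} (b : OrthonormalBasis (Fin (m + 1)) ℝ V)
    (hb : b (Fin.last m) = ξ) :
    ∑ i : Fin m, Rq φ h ξ f₁ f₂ f₃ f₄ f₅ f₆ (b i.castSucc) ξ ξ (b i.castSucc) =
      (f₁ - f₃) * m + (f₄ - f₆) * LinearMap.trace ℝ V h := by
  subst hb
  have sectional (i : Fin m) :
      Rq φ h (b (Fin.last m)) f₁ f₂ f₃ f₄ f₅ f₆
          (b i.castSucc) (b (Fin.last m)) (b (Fin.last m)) (b i.castSucc) =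
        (f₁ - f₃) + (f₄ - f₆) * ⟪h (b i.castSucc), b i.castSucc⟫ := by
    have horth : ⟪b (Fin.last m), b i.castSucc⟫ = 0 := b.inner_eq_zero i.castSucc_lt_last.ne'
    rw [Rq_reeb_reeb (b.norm_eq_one _) hφξ hhξ _ horth, b.inner_eq_one, mul_one]
  rw [Finset.sum_congr rfl fun i _ => sectional i, Finset.sum_add_distrib, ← Finset.mul_sum,
    sum_inner_castSucc_eq_trace b hhξ, Fin.sum_const, nsmul_eq_mul, mul_comm]

theorem stmt9 {V : Type*} [NormedAddCommGroup V] [InnerProductSpace ℝ V]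
    [FiniteDimensional ℝ V]
    (φ h : V →ₗ[ℝ] V) (ξ : V) (f₁ f₂ f₃ f₄ f₅ f₆ : ℝ)
    (hξ : ‖ξ‖ = 1)
    (hφ2 : ∀ X : V, φ (φ X) = -X + ⟪X, ξ⟫ • ξ)
    (hmet : ∀ X Y : V, ⟪φ X, φ Y⟫ = ⟪X, Y⟫ - ⟪X, ξ⟫ * ⟪Y, ξ⟫)
    (hsym : ∀ X Y : V, ⟪h X, Y⟫ = ⟪X, h Y⟫)
    (hhξ : h ξ = 0)
    (n : ℕ) (hn : 1 ≤ n) (hdim : Module.finrank ℝ V = 2 * n + 1)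
    (htr : LinearMap.trace ℝ V h = 0)
    (hf : f₁ - f₃ = 1) :
    ∀ b : OrthonormalBasis (Fin (2 * n + 1)) ℝ V, b (Fin.last (2 * n)) = ξ →
      ∑ i : Fin (2 * n),
          Rq φ h ξ f₁ f₂ f₃ f₄ f₅ f₆ (b i.castSucc) ξ ξ (b i.castSucc) = 2 * n := by
  intro b hb
  simpa [hf, htr] using
    stmt9_general (map_reeb_eq_zero hξ hmet) hhξ f₁ f₂ f₃ f₄ f₅ f₆ b hb
end

section
/- Suppose dim V = 3 and the contact metric algebraic relations h∘φ = −φ∘h and tr(h) = 0 hold. Then the curvature tensor R = f₁R₁ + f₂R₂ + f₃R₃ + f₄R₄ + f₅R₅ + f₆R₆ can be rewritten as R = (f₁ + 3f₂)R₁ + (3f₂ + f₃)R₃ + (f₄ − f₆)R₄. -/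
open RealInnerProductSpace

variable {V : Type*} [NormedAddCommGroup V] [InnerProductSpace ℝ V]

/-! In dimension three `R₂ = 3 (R₁ + R₃)`, `R₅ = 0` and `R₆ = -R₄`. In each identity the difference
of the two sides is bilinear and skew in `X, Y` and vanishes when `X = ξ`. Since `e, φ e, ξ` is an
orthonormal basis for every unit vector `e ⊥ ξ`, it is enough to take `(X, Y) = (e, φ e)`. There
`h` anticommuting with `φ` gives `φ h φ e = h e`, so that the terms of `R₅` cancel in pairs, and
turns `h e = a e + b φ e` into `h φ e = b e - a φ e`, which makes `R₄` vanish together with `R₆`. -/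

/-- An almost contact metric structure `(φ, ξ, η, ⟪·, ·⟫)` on `V`. The one-form `η` is not part of
the data: it is encoded as `X ↦ ⟪X, ξ⟫`. -/
structure IsAlmostContactMetric (φ : V →ₗ[ℝ] V) (ξ : V) : Prop where
  norm_reeb : ‖ξ‖ = 1
  map_map : ∀ X : V, φ (φ X) = -X + ⟪X, ξ⟫ • ξ
  inner_map_map : ∀ X Y : V, ⟪φ X, φ Y⟫ = ⟪X, Y⟫ - ⟪X, ξ⟫ * ⟪Y, ξ⟫

theorem exists_norm_eq_one_and_inner_eq_zero (hdim : 1 < Module.finrank ℝ V) (v : V) :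
    ∃ e : V, ‖e‖ = 1 ∧ ⟪e, v⟫ = 0 := by
  have : FiniteDimensional ℝ V := Module.finite_of_finrank_pos (by lia)
  have hsum := (ℝ ∙ v).finrank_add_finrank_orthogonal
  have hline : Module.finrank ℝ (ℝ ∙ v) ≤ 1 := by
    simpa using finrank_span_le_card (R := ℝ) ({v} : Set V)
  have : Nontrivial (ℝ ∙ v)ᗮ := Module.nontrivial_of_finrank_pos (R := ℝ) (by lia)
  obtain ⟨e, he⟩ := exists_norm_eq (ℝ ∙ v)ᗮ zero_le_one
  exact ⟨e, he, Submodule.mem_orthogonal_singleton_iff_inner_left.mp e.2⟩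

namespace IsAlmostContactMetric

variable {φ h : V →ₗ[ℝ] V} {ξ : V}

theorem inner_reeb_reeb (hφ : IsAlmostContactMetric φ ξ) : ⟪ξ, ξ⟫ = 1 :=
  inner_self_eq_one_of_norm_eq_one (𝕜 := ℝ) hφ.norm_reeb

theorem map_reeb (hφ : IsAlmostContactMetric φ ξ) : φ ξ = 0 := by
  rw [← inner_self_eq_zero (𝕜 := ℝ), hφ.inner_map_map, hφ.inner_reeb_reeb]
  norm_num

theorem inner_map_reeb (hφ : IsAlmostContactMetric φ ξ) (X : V) : ⟪φ X, ξ⟫ = 0 := by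
  have hsmul : ⟪φ X, ξ⟫ • ξ = 0 := by
    -- Compare the two evaluations of `φ³ X`.
    have hcube : φ (φ (φ X)) = -φ X := by rw [hφ.map_map X]; simp [hφ.map_reeb]
    simpa [hcube] using (hφ.map_map (φ X)).symm
  exact (smul_eq_zero.mp hsmul).resolve_right (norm_ne_zero_iff.mp (by simp [hφ.norm_reeb]))

theorem inner_map_left (hφ : IsAlmostContactMetric φ ξ) (X Y : V) : ⟪φ X, Y⟫ = -⟪X, φ Y⟫ := by
  have hmet := hφ.inner_map_map X (φ Y)
  rw [hφ.map_map, inner_add_right, inner_neg_right, real_inner_smul_right, hφ.inner_map_reeb,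
    hφ.inner_map_reeb] at hmet
  linarith

theorem inner_self_map (hφ : IsAlmostContactMetric φ ξ) (X : V) : ⟪X, φ X⟫ = 0 := by
  have hskew := hφ.inner_map_left X X
  rw [real_inner_comm] at hskew
  exact self_eq_neg.mp hskew

theorem map_map_of_inner_eq_zero (hφ : IsAlmostContactMetric φ ξ) {X : V} (hX : ⟪X, ξ⟫ = 0) :
    φ (φ X) = -X := by
  simp [hφ.map_map, hX]

theorem norm_map_of_inner_eq_zero (hφ : IsAlmostContactMetric φ ξ) {X : V} (hX : ⟪X, ξ⟫ = 0) :
    ‖φ X‖ = ‖X‖ := by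
  rw [norm_eq_sqrt_real_inner, norm_eq_sqrt_real_inner, hφ.inner_map_map, hX, mul_zero, sub_zero]

theorem orthonormal_frame (hφ : IsAlmostContactMetric φ ξ) {e : V} (he : ‖e‖ = 1)
    (heξ : ⟪e, ξ⟫ = 0) : Orthonormal ℝ ![e, φ e, ξ] := by
  refine ⟨fun i ↦ ?_, fun i j hij ↦ ?_⟩
  · fin_cases i <;> simp [he, hφ.norm_reeb, hφ.norm_map_of_inner_eq_zero heξ]
  · have hξe : ⟪ξ, e⟫ = 0 := inner_eq_zero_symm.mp heξ
    have hξφe : ⟪ξ, φ e⟫ = 0 := inner_eq_zero_symm.mp (hφ.inner_map_reeb e)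
    have hφee : ⟪φ e, e⟫ = 0 := inner_eq_zero_symm.mp (hφ.inner_self_map e)
    fin_cases i <;> fin_cases j <;>
      simp_all [hφ.inner_map_reeb, hφ.inner_self_map]

theorem eq_frame_expansion (hφ : IsAlmostContactMetric φ ξ) (hdim : Module.finrank ℝ V = 3)
    {e : V} (he : ‖e‖ = 1) (heξ : ⟪e, ξ⟫ = 0) (X : V) :
    X = ⟪e, X⟫ • e + ⟪φ e, X⟫ • φ e + ⟪ξ, X⟫ • ξ := by
  have hon := hφ.orthonormal_frame he heξ
  have hspan : ⊤ ≤ Submodule.span ℝ (Set.range ![e, φ e, ξ]) :=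
    (hon.linearIndependent.span_eq_top_of_card_eq_finrank (by simp [hdim])).ge
  have hsum := (OrthonormalBasis.mk hon hspan).sum_repr' X
  simp only [OrthonormalBasis.coe_mk, Fin.sum_univ_three] at hsum
  exact hsum.symm

theorem map_eq_frame_expansion (hφ : IsAlmostContactMetric φ ξ) (hdim : Module.finrank ℝ V = 3)
    {e : V} (he : ‖e‖ = 1) (heξ : ⟪e, ξ⟫ = 0) (X : V) :
    φ X = ⟪e, X⟫ • φ e - ⟪φ e, X⟫ • e := by
  conv_lhs => rw [hφ.eq_frame_expansion hdim he heξ X]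
  simp only [map_add, map_smul, hφ.map_map_of_inner_eq_zero heξ, hφ.map_reeb]
  module

theorem eq_zero_of_skew {W : Type*} [AddCommGroup W] [Module ℝ W]
    (hφ : IsAlmostContactMetric φ ξ) (hdim : Module.finrank ℝ V = 3) {T : V → V → W}
    (hlin : ∀ Y, IsLinearMap ℝ (T · Y)) (hskew : ∀ X Y, T X Y = -T Y X)
    (hreeb : ∀ Y, T ξ Y = 0) (hframe : ∀ e, ‖e‖ = 1 → ⟪e, ξ⟫ = 0 → T e (φ e) = 0) (X Y : V) :
    T X Y = 0 := by
  obtain ⟨e, he, heξ⟩ := exists_norm_eq_one_and_inner_eq_zero (by lia) ξ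
  have eq_zero_of_frame {Y : V} (h₁ : T e Y = 0) (h₂ : T (φ e) Y = 0) (X : V) : T X Y = 0 := by
    rw [hφ.eq_frame_expansion hdim he heξ X]
    simp [(hlin Y).map_add, (hlin Y).map_smul, h₁, h₂, hreeb]
  have hself (X : V) : T X X = 0 := by
    have : IsAddTorsionFree W := .of_isTorsionFree ℝ W
    exact self_eq_neg.mp (hskew X X)
  have heφe : T e (φ e) = 0 := hframe e he heξ
  have hφee : T (φ e) e = 0 := by rw [hskew, heφe, neg_zero]
  have he_left : T e Y = 0 := by rw [hskew, eq_zero_of_frame (hself e) hφee, neg_zero]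
  have hφe_left : T (φ e) Y = 0 := by rw [hskew, eq_zero_of_frame heφe (hself (φ e)), neg_zero]
  exact eq_zero_of_frame he_left hφe_left X

theorem R2_eq_three_smul_R1_add_R3 (hφ : IsAlmostContactMetric φ ξ)
    (hdim : Module.finrank ℝ V = 3) (X Y Z : V) :
    R2 φ X Y Z = (3 : ℝ) • (R1 X Y Z + R3 ξ X Y Z) := by
  refine sub_eq_zero.mp (hφ.eq_zero_of_skew hdim
    (T := fun X Y ↦ R2 φ X Y Z - (3 : ℝ) • (R1 X Y Z + R3 ξ X Y Z)) (fun Y ↦ ⟨?_, ?_⟩) ?_ ?_ ?_ X Y)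
  · intro X X'
    simp only [R1, R2, R3, map_add, inner_add_left]
    module
  · intro c X
    simp only [R1, R2, R3, map_smul, real_inner_smul_left]
    module
  · intro X Y
    have hφXY : ⟪Y, φ X⟫ = -⟪X, φ Y⟫ := by rw [real_inner_comm, hφ.inner_map_left]
    simp only [R1, R2, R3, hφXY]
    module
  · intro Y
    have hξφ (W : V) : ⟪ξ, φ W⟫ = 0 := inner_eq_zero_symm.mp (hφ.inner_map_reeb W)
    simp only [R1, R2, R3, hφ.map_reeb, hφ.inner_reeb_reeb, hξφ, real_inner_comm Z ξ]
    module
  · intro e he heξ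
    have hee : ⟪e, e⟫ = 1 := inner_self_eq_one_of_norm_eq_one (𝕜 := ℝ) he
    have heφZ : ⟪e, φ Z⟫ = -⟪φ e, Z⟫ := by rw [hφ.inner_map_left, neg_neg]
    simp only [R1, R2, R3, hφ.map_map_of_inner_eq_zero heξ, hφ.inner_map_map, hφ.inner_map_reeb,
      heξ, hee, heφZ, inner_neg_right]
    rw [hφ.map_eq_frame_expansion hdim he heξ Z]
    module

theorem R6_eq_neg_R4 (hφ : IsAlmostContactMetric φ ξ) (hdim : Module.finrank ℝ V = 3)
    (hsym : h.IsSymmetric) (hhξ : h ξ = 0) (hanti : ∀ X, h (φ X) = -φ (h X)) (X Y Z : V) :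
    R6 ξ h X Y Z = -R4 h X Y Z := by
  refine eq_neg_of_add_eq_zero_left (hφ.eq_zero_of_skew hdim
    (T := fun X Y ↦ R6 ξ h X Y Z + R4 h X Y Z) (fun Y ↦ ⟨?_, ?_⟩) ?_ ?_ ?_ X Y)
  · intro X X'
    simp only [R4, R6, map_add, inner_add_left]
    module
  · intro c X
    simp only [R4, R6, map_smul, real_inner_smul_left]
    module
  · intro X Y
    simp only [R4, R6]
    module
  · intro Y
    simp only [R4, R6, hhξ, hφ.inner_reeb_reeb, inner_zero_left, real_inner_comm Z ξ]
    module
  · intro e he heξ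
    have hξhe : ⟪ξ, h e⟫ = 0 := by rw [← hsym, hhξ, inner_zero_left]
    obtain ⟨a, b, hhe⟩ : ∃ a b : ℝ, h e = a • e + b • φ e :=
      ⟨_, _, by simpa [hξhe] using hφ.eq_frame_expansion hdim he heξ (h e)⟩
    have hhφe : h (φ e) = b • e - a • φ e := by
      rw [hanti, hhe, map_add, map_smul, map_smul, hφ.map_map_of_inner_eq_zero heξ]
      module
    simp only [R4, R6, heξ, hφ.inner_map_reeb, hhe, hhφe, inner_add_left, inner_sub_left,
      real_inner_smul_left]
    module

theorem R5_self_map (hφ : IsAlmostContactMetric φ ξ) (hanti : ∀ X, h (φ X) = -φ (h X))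
    {X : V} (hX : ⟪h X, ξ⟫ = 0) (Z : V) : R5 φ h X (φ X) Z = 0 := by
  have hφhφX : φ (h (φ X)) = h X := by
    rw [hanti, map_neg, hφ.map_map_of_inner_eq_zero hX, neg_neg]
  rw [R5, hφhφX, hanti, inner_neg_left]
  module

theorem R5_eq_zero (hφ : IsAlmostContactMetric φ ξ) (hdim : Module.finrank ℝ V = 3)
    (hsym : h.IsSymmetric) (hhξ : h ξ = 0) (hanti : ∀ X, h (φ X) = -φ (h X)) (X Y Z : V) :
    R5 φ h X Y Z = 0 := by
  refine hφ.eq_zero_of_skew hdim (T := fun X Y ↦ R5 φ h X Y Z) (fun Y ↦ ⟨?_, ?_⟩) ?_ ?_ ?_ X Y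
  · intro X X'
    simp only [R5, map_add, inner_add_left]
    module
  · intro c X
    simp only [R5, map_smul, real_inner_smul_left]
    module
  · intro X Y
    simp only [R5]
    module
  · intro Y
    simp [R5, hhξ]
  · intro e _ _
    exact hφ.R5_self_map hanti (by rw [hsym, hhξ, inner_zero_right]) Z

end IsAlmostContactMetric

theorem stmt13 {V : Type*} [NormedAddCommGroup V] [InnerProductSpace ℝ V]
    [FiniteDimensional ℝ V]
    (φ h : V →ₗ[ℝ] V) (ξ : V) (f₁ f₂ f₃ f₄ f₅ f₆ : ℝ)
    (hξ : ‖ξ‖ = 1)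
    (hφ2 : ∀ X : V, φ (φ X) = -X + ⟪X, ξ⟫ • ξ)
    (hmet : ∀ X Y : V, ⟪φ X, φ Y⟫ = ⟪X, Y⟫ - ⟪X, ξ⟫ * ⟪Y, ξ⟫)
    (hsym : ∀ X Y : V, ⟪h X, Y⟫ = ⟪X, h Y⟫)
    (hhξ : h ξ = 0)
    (hdim : Module.finrank ℝ V = 3)
    (hanti : ∀ X : V, h (φ X) = -φ (h X))
    (htr : LinearMap.trace ℝ V h = 0) :
    ∀ X Y Z : V,
      Rc φ h ξ f₁ f₂ f₃ f₄ f₅ f₆ X Y Z =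
        (f₁ + 3 * f₂) • R1 X Y Z + (3 * f₂ + f₃) • R3 ξ X Y Z
          + (f₄ - f₆) • R4 h X Y Z := by
  intro X Y Z
  have hφ : IsAlmostContactMetric φ ξ := ⟨hξ, hφ2, hmet⟩
  have hR2 := hφ.R2_eq_three_smul_R1_add_R3 hdim X Y Z
  have hR5 := hφ.R5_eq_zero hdim hsym hhξ hanti X Y Z
  have hR6 := hφ.R6_eq_neg_R4 hdim hsym hhξ hanti X Y Z
  rw [Rc, hR2, hR5, hR6]
  module
end
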